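/- The initial element of a chain is unique: if x and y are both initial elements and they belong to the same chain (i.e., x ⊑ y or y ⊑ x), then x = y. -/

import Mathlib

def SB.Valid {α β : Type*} (P : Set α) (Q : Set β) : α ⊕ β → Prop
  | Sum.inl p => p ∈ P
  | Sum.inr q => q ∈ Q

def SB.step {α β : Type*} (f : α → β) (g : β → α) : α ⊕ β → α ⊕ β
  | Sum.inl p => Sum.inr (f p)
  | Sum.inr q => Sum.inl (g q)

def SB.ChainLE {α β : Type*} (f : α → β) (g : β → α) : α ⊕ β → α ⊕ β → Prop :=
  Relation.ReflTransGen (fun x y => y = SB.step f g x)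

def SB.Initial {α β : Type*} (P : Set α) (Q : Set β) (f : α → β) (g : β → α) :
    α ⊕ β → Prop
  | Sum.inl p => p ∉ g '' Q
  | Sum.inr q => q ∉ f '' P

theorem SB.valid_of_chainLE {α β : Type*} {P : Set α} {Q : Set β}
    {f : α → β} {g : β → α} (hfm : Set.MapsTo f P Q) (hgm : Set.MapsTo g Q P)
    {x y : α ⊕ β} (hx : SB.Valid P Q x) (h : SB.ChainLE f g x y) : SB.Valid P Q y := by
  unfold SB.ChainLE at h
  induction h with
  | refl => exact hx
  | @tail b c _ hs ih =>
    subst hs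
    cases b with
    | inl p => exact hfm ih
    | inr q => exact hgm ih

theorem SB.eq_of_chainLE {α β : Type*} {P : Set α} {Q : Set β}
    {f : α → β} {g : β → α} (hfm : Set.MapsTo f P Q) (hgm : Set.MapsTo g Q P)
    {x y : α ⊕ β} (hx : SB.Valid P Q x) (hy : SB.Initial P Q f g y)
    (h : SB.ChainLE f g x y) : x = y := by
  rcases Relation.ReflTransGen.cases_tail h with h | ⟨b, hb, hs⟩
  · exact h.symm
  · have hv := SB.valid_of_chainLE hfm hgm hx hb
    subst hs
    cases b with
    | inl p => exact absurd ⟨p, hv, rfl⟩ hy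
    | inr q => exact absurd ⟨q, hv, rfl⟩ hy

theorem initial_unique {α β : Type*} (P : Set α) (Q : Set β)
    (f : α → β) (g : β → α)
    (hfm : Set.MapsTo f P Q) (hfi : Set.InjOn f P)
    (hgm : Set.MapsTo g Q P) (hgi : Set.InjOn g Q)
    (x y : α ⊕ β) (hxv : SB.Valid P Q x) (hyv : SB.Valid P Q y)
    (hxi : SB.Initial P Q f g x) (hyi : SB.Initial P Q f g y)
    (hxy : SB.ChainLE f g x y ∨ SB.ChainLE f g y x) :
    x = y := by
  rcases hxy with h | h
  · exact SB.eq_of_chainLE hfm hgm hxv hyi h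
  · exact (SB.eq_of_chainLE hfm hgm hyv hxi h).symm
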